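/- Let k and N be positive integers and q a complex number with 0 < |q| < 1. Define S_k := Σ over all tuples (i_1, i_2, …, i_k) of nonnegative integers of q^{i_k^2 + (i_k+i_{k−1})^2 + ⋯ + (i_k+⋯+i_3+i_2)^2} · q^{k·i_k + (k−1)·i_{k−1} + ⋯ + 2·i_2 + i_1} · (q^N;q)_{i_1+⋯+i_k} · (q^{1−N};q)_{i_1+⋯+i_k} / ((q;q)_{i_1} (q;q)_{i_2} ⋯ (q;q)_{i_k}) (where the quadratic exponent involves only i_2,…,i_k; for k = 1 it is 0). Then S_k = q^{k·N(N−1)}. (The sum is finite: every term with i_1+⋯+i_k ≥ N vanishes, since (q^{1−N};q)_n = 0 for n ≥ N.) -/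

import Mathlib

/-!
Put `m = i_2 + ⋯ + i_k`. For fixed `i_2, …, i_k`, the sum over `i_1` is a terminating
q-Chu–Vandermonde sum with lower parameter `0`,
`∑_i (q^{-n};q)_i (b;q)_i q^i / (q;q)_i = b^n`, at `n = N - 1 - m` and `b = q^{N+m}`. Its value
`q^{N(N-1) - m² - m}` is compensated by the factor `q^{m² + m}` that the summand of `S_k` has in
excess over that of `S_{k-1}`, so the dependence on `m` disappears and
`S_k = q^{N(N-1)} S_{k-1}`, with `S_0 = 1`.

The q-Chu–Vandermonde sum follows by induction on `n`: replacing `a = q^{-n-1}` by `aq = q^{-n}`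
in `(a;q)_i` changes the terms by multiples of shifted terms of the same series at `(aq, bq)`, so
that passing from `n` to `n + 1` adds `-(1 - b) b^n` to the sum.
-/

open Finset

/-- Finite q-Pochhammer symbol `(a;q)_n`. -/
noncomputable def qPoch (a q : ℂ) (n : ℕ) : ℂ := ∏ j ∈ Finset.range n, (1 - a * q ^ j)

/-- The summand of `S_k`: for a tuple `(i_1, …, i_k)` of nonnegative integers (here `i ⟨j⟩`
    represents `i_{j+1}`), the term
    `q^{i_k² + (i_k+i_{k−1})² + ⋯ + (i_k+⋯+i_2)²} · q^{k·i_k + ⋯ + 2·i_2 + i_1}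
      · (q^N;q)_{i_1+⋯+i_k} (q^{1−N};q)_{i_1+⋯+i_k} / ((q;q)_{i_1} ⋯ (q;q)_{i_k})`. -/
noncomputable def Sterm (k N : ℕ) (q : ℂ) (i : Fin k → ℕ) : ℂ :=
  q ^ (∑ t ∈ Finset.Ico 1 k,
        (∑ j ∈ Finset.univ.filter (fun j : Fin k => t ≤ j.val), i j) ^ 2)
    * q ^ (∑ j : Fin k, (j.val + 1) * i j)
    * qPoch (q ^ (N : ℤ)) q (∑ j, i j) * qPoch (q ^ (1 - (N : ℤ))) q (∑ j, i j)
    / ∏ j, qPoch q q (i j)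

lemma not_isOfFinOrder_of_norm_lt_one {K : Type*} [NormedDivisionRing K] {q : K}
    (hq : ‖q‖ < 1) : ¬IsOfFinOrder q :=
  fun h => hq.ne h.norm_eq_one

lemma zpow_one_sub_succ_mul_pow {G : Type*} [GroupWithZero G] {q : G} (hq0 : q ≠ 0)
    (n : ℕ) : q ^ (1 - ((n + 1 : ℕ) : ℤ)) * q ^ n = 1 := by
  rw [← zpow_natCast q n, ← zpow_add₀ hq0]
  simp

lemma qPoch_zero (a q : ℂ) : qPoch a q 0 = 1 := prod_range_zero _

lemma qPoch_add (a q : ℂ) (m n : ℕ) :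
    qPoch a q (m + n) = qPoch a q m * qPoch (a * q ^ m) q n := by
  simp only [qPoch, prod_range_add, pow_add, mul_assoc]

lemma qPoch_succ (a q : ℂ) (n : ℕ) : qPoch a q (n + 1) = qPoch a q n * (1 - a * q ^ n) :=
  prod_range_succ _ n

lemma qPoch_succ' (a q : ℂ) (n : ℕ) : qPoch a q (n + 1) = (1 - a) * qPoch (a * q) q n := by
  simp only [qPoch, prod_range_succ', pow_succ', pow_zero, mul_one, mul_assoc, mul_comm]

lemma qPoch_self_succ (q : ℂ) (n : ℕ) :
    qPoch q q (n + 1) = qPoch q q n * (1 - q ^ (n + 1)) := by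
  rw [qPoch_succ, pow_succ']

lemma qPoch_succ_eq_qPoch_mul_succ_sub (a q : ℂ) (n : ℕ) :
    qPoch a q (n + 1) = qPoch (a * q) q (n + 1) - a * (1 - q ^ (n + 1)) * qPoch (a * q) q n := by
  rw [qPoch_succ', qPoch_succ]
  ring

lemma qPoch_eq_zero {a q : ℂ} {m n : ℕ} (h : a * q ^ m = 1) (hmn : m < n) : qPoch a q n = 0 :=
  prod_eq_zero (mem_range.mpr hmn) (by rw [h, sub_self])

lemma qPoch_self_ne_zero {q : ℂ} (hq : ¬IsOfFinOrder q) (n : ℕ) : qPoch q q n ≠ 0 := by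
  refine prod_ne_zero_iff.mpr fun j _ h => hq ?_
  rw [← pow_succ', sub_eq_zero] at h
  exact isOfFinOrder_iff_pow_eq_one.mpr ⟨j + 1, j.succ_pos, h.symm⟩

/-- The `i`-th term of the basic hypergeometric series `₂φ₁(a, b; 0; q, q)`. -/
noncomputable def phiTerm (a b q : ℂ) (i : ℕ) : ℂ :=
  qPoch a q i * qPoch b q i * (q ^ i / qPoch q q i)

lemma phiTerm_zero (a b q : ℂ) : phiTerm a b q 0 = 1 := by
  simp [phiTerm, qPoch_zero]

lemma phiTerm_succ {q : ℂ} (hq : ¬IsOfFinOrder q) (a b : ℂ) (i : ℕ) :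
    phiTerm a b q (i + 1) =
      phiTerm (a * q) b q (i + 1) - a * q * (1 - b) * phiTerm (a * q) (b * q) q i := by
  obtain ⟨hden, hfactor⟩ : qPoch q q i ≠ 0 ∧ 1 - q ^ (i + 1) ≠ 0 := by
    simpa only [qPoch_self_succ, mul_ne_zero_iff] using qPoch_self_ne_zero hq (i + 1)
  simp only [phiTerm]
  rw [qPoch_succ_eq_qPoch_mul_succ_sub a, qPoch_self_succ, qPoch_succ' b]
  field_simp
  ring

theorem hasSum_phiTerm {q : ℂ} (hq : ¬IsOfFinOrder q) {n : ℕ} {a : ℂ} (ha : a * q ^ n = 1)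
    (b : ℂ) : HasSum (phiTerm a b q) (b ^ n) := by
  induction n generalizing a b with
  | zero =>
    have hvanish : ∀ i ≠ 0, phiTerm a b q i = 0 := fun i hi => by
      simp [phiTerm, qPoch_eq_zero ha (Nat.pos_of_ne_zero hi)]
    simpa [phiTerm_zero] using hasSum_single 0 hvanish
  | succ n ih =>
    have haq : a * q * q ^ n = 1 := by rw [mul_assoc, ← pow_succ', ha]
    have hshift : HasSum (fun i => phiTerm (a * q) b q (i + 1)) (b ^ n - 1) := by
      simpa [phiTerm_zero] using (hasSum_nat_add_iff' 1).mpr (ih haq b)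
    have htail := hshift.sub ((ih haq (b * q)).mul_left (a * q * (1 - b)))
    simp only [← phiTerm_succ hq] at htail
    rw [← hasSum_nat_add_iff' 1]
    convert htail using 1
    simp only [sum_range_one, phiTerm_zero, mul_pow]
    linear_combination (1 - b) * b ^ n * haq

/-- The product `(q^N;q)_n (q^{1-N};q)_n`, through which `N` enters the summand of `S_k`. -/
noncomputable def qPochPair (N : ℕ) (q : ℂ) (n : ℕ) : ℂ :=
  qPoch (q ^ (N : ℤ)) q n * qPoch (q ^ (1 - (N : ℤ))) q n

lemma qPochPair_eq_zero {N n : ℕ} {q : ℂ} (hq0 : q ≠ 0) (hN : 1 ≤ N) (hn : N ≤ n) :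
    qPochPair N q n = 0 := by
  obtain ⟨N, rfl⟩ := Nat.exists_eq_add_of_le' hN
  rw [qPochPair, qPoch_eq_zero (zpow_one_sub_succ_mul_pow hq0 N) hn, mul_zero]

lemma qPochPair_add_mul (N m i : ℕ) (q : ℂ) :
    qPochPair N q (m + i) * (q ^ i / qPoch q q i) =
      qPochPair N q m * phiTerm (q ^ (1 - (N : ℤ)) * q ^ m) (q ^ (N : ℤ) * q ^ m) q i := by
  simp only [qPochPair, phiTerm, qPoch_add]
  ring

lemma hasSum_qPochPair_add {N : ℕ} {q : ℂ} (hq0 : q ≠ 0) (hq : ¬IsOfFinOrder q) (hN : 1 ≤ N)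
    (m : ℕ) :
    HasSum (fun i => q ^ (m ^ 2 + m) * (qPochPair N q (m + i) * (q ^ i / qPoch q q i)))
      (q ^ (N * (N - 1)) * qPochPair N q m) := by
  rcases le_or_gt N m with hm | hm
  · simp [qPochPair_eq_zero hq0 hN, hm, le_add_right hm, hasSum_zero]
  · obtain ⟨n, rfl⟩ := Nat.exists_eq_add_of_lt hm
    have hterminates : q ^ (1 - ((m + n + 1 : ℕ) : ℤ)) * q ^ m * q ^ n = 1 := by
      rw [mul_assoc, ← pow_add, zpow_one_sub_succ_mul_pow hq0]
    have hvalue : q ^ (m ^ 2 + m) * (q ^ ((m + n + 1 : ℕ) : ℤ) * q ^ m) ^ n =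
        q ^ ((m + n + 1) * (m + n)) := by
      rw [zpow_natCast, ← pow_add, ← pow_mul, ← pow_add]
      ring_nf
    simp only [qPochPair_add_mul]
    have hsum := ((hasSum_phiTerm hq hterminates (q ^ ((m + n + 1 : ℕ) : ℤ) * q ^ m)).mul_left
      (qPochPair (m + n + 1) q m)).mul_left (q ^ (m ^ 2 + m))
    rwa [mul_left_comm, hvalue, mul_comm (qPochPair _ _ _)] at hsum

/-- The tail sum `i_{t+1} + ⋯ + i_k` of a tuple `(i_1, …, i_k)`; recall that `i ⟨j⟩` stands for
`i_{j+1}`. -/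
def tailSum {k : ℕ} (i : Fin k → ℕ) (t : ℕ) : ℕ := ∑ j with t ≤ j.val, i j

lemma tailSum_zero {k : ℕ} (i : Fin k → ℕ) : tailSum i 0 = ∑ j, i j := by
  simp [tailSum]

lemma tailSum_cons_succ {k : ℕ} (a : ℕ) (i : Fin k → ℕ) (t : ℕ) :
    tailSum (Fin.cons a i : Fin (k + 1) → ℕ) (t + 1) = tailSum i t := by
  simp [tailSum, sum_filter, Fin.sum_univ_succ]

lemma sum_tailSum_sq_cons {k : ℕ} (a : ℕ) (i : Fin k → ℕ) :
    ∑ t ∈ Ico 1 (k + 1), tailSum (Fin.cons a i : Fin (k + 1) → ℕ) t ^ 2 =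
      (∑ j, i j) ^ 2 + ∑ t ∈ Ico 1 k, tailSum i t ^ 2 := by
  rw [← sum_Ico_add' _ 0 k 1]
  simp only [tailSum_cons_succ]
  rcases k.eq_zero_or_pos with rfl | hk
  · simp
  · rw [sum_eq_sum_Ico_succ_bot hk, tailSum_zero]

lemma sum_succ_mul_cons {k : ℕ} (a : ℕ) (i : Fin k → ℕ) :
    ∑ j : Fin (k + 1), (j.val + 1) * (Fin.cons a i : Fin (k + 1) → ℕ) j =
      a + ∑ j, i j + ∑ j : Fin k, (j.val + 1) * i j := by
  simp only [Fin.sum_univ_succ, Fin.cons_zero, Fin.cons_succ, Fin.val_zero, Fin.val_succ,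
    add_one_mul _ (i _), sum_add_distrib]
  ring

/-- The part of the summand of `S_k` that does not depend on `N`: the powers of `q` and the
denominator `(q;q)_{i_1} ⋯ (q;q)_{i_k}`. -/
noncomputable def multisumWeight {k : ℕ} (q : ℂ) (i : Fin k → ℕ) : ℂ :=
  q ^ (∑ t ∈ Ico 1 k, tailSum i t ^ 2) * q ^ (∑ j : Fin k, (j.val + 1) * i j) /
    ∏ j, qPoch q q (i j)

lemma multisumWeight_cons {k : ℕ} (q : ℂ) (a : ℕ) (i : Fin k → ℕ) :
    multisumWeight q (Fin.cons a i : Fin (k + 1) → ℕ) =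
      multisumWeight q i * (q ^ ((∑ j, i j) ^ 2 + ∑ j, i j) * (q ^ a / qPoch q q a)) := by
  simp only [multisumWeight, sum_tailSum_sq_cons, sum_succ_mul_cons, Fin.prod_univ_succ,
    Fin.cons_zero, Fin.cons_succ, pow_add, div_eq_mul_inv, mul_inv]
  ring

lemma Sterm_eq_multisumWeight_mul (k N : ℕ) (q : ℂ) (i : Fin k → ℕ) :
    Sterm k N q i = multisumWeight q i * qPochPair N q (∑ j, i j) := by
  simp only [Sterm, multisumWeight, tailSum, qPochPair]
  ring

lemma Sterm_cons (k N : ℕ) (q : ℂ) (a : ℕ) (i : Fin k → ℕ) :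
    Sterm (k + 1) N q (Fin.cons a i) =
      multisumWeight q i * (q ^ ((∑ j, i j) ^ 2 + ∑ j, i j) *
        (qPochPair N q (∑ j, i j + a) * (q ^ a / qPoch q q a))) := by
  rw [Sterm_eq_multisumWeight_mul, multisumWeight_cons, Fin.sum_cons, add_comm a]
  ring

section

variable {N : ℕ} {q : ℂ} (k : ℕ)

lemma Sterm_eq_zero (hq0 : q ≠ 0) (hN : 1 ≤ N) (i : Fin k → ℕ) (hi : N ≤ ∑ j, i j) :
    Sterm k N q i = 0 := by
  rw [Sterm_eq_multisumWeight_mul, qPochPair_eq_zero hq0 hN hi, mul_zero]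

lemma summable_Sterm (hq0 : q ≠ 0) (hN : 1 ≤ N) : Summable (Sterm k N q) := by
  refine summable_of_hasFiniteSupport ((Set.finite_Iic fun _ => N).subset fun i hi j => ?_)
  by_contra! hj
  have hsum : i j ≤ ∑ j, i j := single_le_sum_of_canonicallyOrdered (mem_univ j)
  exact hi (Sterm_eq_zero k hq0 hN i (hj.le.trans hsum))

lemma tsum_Sterm_succ (hq0 : q ≠ 0) (hq : ¬IsOfFinOrder q) (hN : 1 ≤ N) :
    ∑' i, Sterm (k + 1) N q i = q ^ (N * (N - 1)) * ∑' i, Sterm k N q i := by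
  let e : (Fin k → ℕ) × ℕ ≃ (Fin (k + 1) → ℕ) :=
    (Equiv.prodComm _ _).trans (Fin.consEquiv fun _ => ℕ)
  have hsummable : Summable fun p => Sterm (k + 1) N q (e p) :=
    (e.summable_iff (f := Sterm (k + 1) N q)).mpr (summable_Sterm (k + 1) hq0 hN)
  have hfirst (i : Fin k → ℕ) :
      ∑' a, Sterm (k + 1) N q (e (i, a)) = q ^ (N * (N - 1)) * Sterm k N q i := calc
    _ = ∑' a, Sterm (k + 1) N q (Fin.cons a i) := rfl
    _ = multisumWeight q i * (q ^ (N * (N - 1)) * qPochPair N q (∑ j, i j)) := by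
      simp only [Sterm_cons]
      exact ((hasSum_qPochPair_add hq0 hq hN _).mul_left _).tsum_eq
    _ = q ^ (N * (N - 1)) * Sterm k N q i := by
      rw [Sterm_eq_multisumWeight_mul, mul_left_comm]
  rw [← e.tsum_eq, hsummable.tsum_prod, ← tsum_mul_left]
  exact tsum_congr hfirst

end

theorem statement7_general (k : ℕ) {N : ℕ} {q : ℂ} (hq0 : q ≠ 0) (hq : ¬IsOfFinOrder q)
    (hN : 1 ≤ N) :
    (∀ i : Fin k → ℕ, N ≤ ∑ j, i j → Sterm k N q i = 0) ∧
    ∑' i : Fin k → ℕ, Sterm k N q i = q ^ (k * N * (N - 1)) := by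
  refine ⟨Sterm_eq_zero k hq0 hN, ?_⟩
  induction k with
  | zero => simp [tsum_fintype, Sterm, qPoch_zero]
  | succ k ih =>
    rw [tsum_Sterm_succ k hq0 hq hN, ih, ← pow_add]
    ring_nf

/-- `S_k = q^{k·N(N−1)}`; moreover the sum is finite since every term with
    `i_1 + ⋯ + i_k ≥ N` vanishes. -/
theorem statement7 (k N : ℕ) (hk : 1 ≤ k) (hN : 1 ≤ N) (q : ℂ)
    (hq0 : 0 < ‖q‖) (hq1 : ‖q‖ < 1) :
    (∀ i : Fin k → ℕ, N ≤ ∑ j, i j → Sterm k N q i = 0) ∧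
    ∑' i : Fin k → ℕ, Sterm k N q i = q ^ (k * N * (N - 1)) :=
  statement7_general k (norm_pos_iff.mp hq0) (not_isOfFinOrder_of_norm_lt_one hq1) hN
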